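/- Let f(x) = a·x² + b·x + c with a ≥ 1 and b, c ≥ 0. In the root q-Jaco graph J_∞(f), the out-degrees of consecutive vertices are never equal: d⁺(v_i) ≠ d⁺(v_{i+1}) for every i ∈ ℕ, where d⁺(v_i) = f(i) − d⁻(v_i). -/

import Mathlib

/-- In-degree of vertex `v_j` in the (root) Jaco graph with incidence function `f`:
`d⁻(v_j) = |{ i : 1 ≤ i < j, i + f i − d⁻(v_i) ≥ j }|`. -/
noncomputable def jacoIn (f : ℕ → ℕ) (j : ℕ) : ℕ :=
  Nat.strongRecOn j (fun j ih =>
    (((Finset.Ico 1 j).attach).filter (fun i : {x // x ∈ Finset.Ico 1 j} =>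
      j ≤ i.1 + f i.1 - ih i.1 (Finset.mem_Ico.mp i.2).2)).card)

/-- The arc `(v_i, v_j)` is present in the Jaco graph iff `1 ≤ i < j` and
`i + f i − d⁻(v_i) ≥ j`. -/
def jacoArc (f : ℕ → ℕ) (i j : ℕ) : Prop :=
  1 ≤ i ∧ i < j ∧ j ≤ i + f i - jacoIn f i

noncomputable instance (f : ℕ → ℕ) (i j : ℕ) : Decidable (jacoArc f i j) := by
  unfold jacoArc; infer_instance

/-- The underlying undirected simple graph `J*_n(f)` of the finite Jaco graph `J_n(f)`,
on vertex set `{v_1, …, v_n}` (vertex `x : Fin n` represents `v_{x+1}`). -/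
def jacoGraph (f : ℕ → ℕ) (n : ℕ) : SimpleGraph (Fin n) :=
  SimpleGraph.fromRel (fun x y => jacoArc f (x.1 + 1) (y.1 + 1))

noncomputable instance (f : ℕ → ℕ) (n : ℕ) : DecidableRel (jacoGraph f n).Adj := fun x y =>
  decidable_of_iff
    (x ≠ y ∧ (jacoArc f (x.1 + 1) (y.1 + 1) ∨ jacoArc f (y.1 + 1) (x.1 + 1)))
    (by unfold jacoGraph; exact (SimpleGraph.fromRel_adj (fun a b : Fin n => jacoArc f (a.1 + 1) (b.1 + 1)) x y).symm)

theorem jacoIn_eq (f : ℕ → ℕ) (j : ℕ) :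
    jacoIn f j = ((Finset.Ico 1 j).filter (fun i => j ≤ i + f i - jacoIn f i)).card := by
  have h : jacoIn f j = (((Finset.Ico 1 j).attach).filter
      (fun i : {x // x ∈ Finset.Ico 1 j} => j ≤ i.1 + f i.1 - jacoIn f i.1)).card := by
    conv_lhs => unfold jacoIn
    rw [Nat.strongRecOn_eq]
    rfl
  rw [h, ← Finset.card_map (Function.Embedding.subtype _)]
  congr 1
  ext x
  simp only [Finset.mem_map, Finset.mem_filter, Finset.mem_attach, true_and,
    Function.Embedding.coe_subtype, Subtype.exists, exists_and_right, exists_eq_right]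
  constructor
  · rintro ⟨h1, h2⟩
    exact ⟨h1, h2⟩
  · rintro ⟨h1, h2⟩
    exact ⟨h1, h2⟩

theorem jacoIn_le (f : ℕ → ℕ) (j : ℕ) : jacoIn f j ≤ j - 1 := by
  rw [jacoIn_eq]
  exact (Finset.card_filter_le _ _).trans (by simp)

theorem jacoIn_succ_le (f : ℕ → ℕ) (j : ℕ) : jacoIn f (j + 1) ≤ jacoIn f j + 1 := by
  rw [jacoIn_eq f (j + 1), jacoIn_eq f j]
  refine (Finset.card_le_card (t := insert j
    ((Finset.Ico 1 j).filter (fun i => j ≤ i + f i - jacoIn f i))) ?_).trans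
    (Finset.card_insert_le _ _)
  intro x
  simp only [Finset.mem_filter, Finset.mem_Ico, Finset.mem_insert]
  omega

/-- For `f(x) = a·x² + b·x + c` (`a ≥ 1`, `b, c ≥ 0`), in the root
q-Jaco graph `J_∞(f)` the out-degrees `d⁺(v_i) = f(i) − d⁻(v_i)` of consecutive
vertices are never equal. -/
theorem qJaco_outdegrees_distinct (a b c : ℕ) (ha : 1 ≤ a) (i : ℕ) (hi : 1 ≤ i) :
    (a * i ^ 2 + b * i + c) - jacoIn (fun x => a * x ^ 2 + b * x + c) i ≠
      (a * (i + 1) ^ 2 + b * (i + 1) + c) -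
        jacoIn (fun x => a * x ^ 2 + b * x + c) (i + 1) := by
  have h1 := jacoIn_le (fun x => a * x ^ 2 + b * x + c) i
  have h2 := jacoIn_succ_le (fun x => a * x ^ 2 + b * x + c) i
  have h3 : i ≤ a * i ^ 2 + b * i + c := by nlinarith
  have h4 : a * i ^ 2 + b * i + c + 2 ≤ a * (i + 1) ^ 2 + b * (i + 1) + c := by nlinarith
  omega
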